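/- arXiv:2207.13546 — 2 statements merged into one kernel-verified Lean document; each statement's English description precedes it below -/
import Mathlib

section
/- Let F be a field of characteristic zero containing a primitive n-th root of unity for every n ≥ 1 (e.g. F = ℂ). Let V ⊆ F(z) be the F-subalgebra generated by z, z⁻¹, and the elements (1−zⁿ)⁻¹ for all n ≥ 1. Suppose ρ : V → F is an F-linear map such that ρ(z^j) = 0 for every integer j, and such that for all n ≥ 1, k ≥ 0 and 0 ≤ a < n one has ρ( z^{nk+a} / (1−zⁿ)^{k+1} ) = 1 if k = 0 and a = 0, and 0 otherwise. Then ρ(f) = ρ_K(f) for every f ∈ V; in other words, ρ_K is the unique residue map for the K-theory of Deligne–Mumford stacks. -/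
open scoped LaurentSeries

/-- The constant coefficient (coefficient of `z⁰`) of the formal Laurent-series expansion
at `z = 0` of a rational function. -/
noncomputable def laurentCoeffZero {F : Type*} [Field F] (f : RatFunc F) : F :=
  ((f : LaurentSeries F)).coeff 0

/-- The K-theoretic residue map `ρ_K(f) := (coeff of z⁰ of the expansion of f at 0) −
(coeff of z⁰ of the expansion at 0 of f(z⁻¹))`, where `f ↦ f(z⁻¹)` is the `F`-algebra
automorphism `ι` of `F(z)` with `ι(z) = z⁻¹`. -/
noncomputable def rhoK {F : Type*} [Field F] (ι : RatFunc F ≃ₐ[F] RatFunc F)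
    (f : RatFunc F) : F :=
  laurentCoeffZero f - laurentCoeffZero (ι f)

open scoped Polynomial RatFunc in
theorem laurentCoeffZero_div {F : Type*} [Field F] (p q : F[X]) (hq : q.coeff 0 ≠ 0) :
    laurentCoeffZero (algebraMap F[X] (RatFunc F) p / algebraMap F[X] (RatFunc F) q) =
      p.coeff 0 / q.coeff 0 := by
  have hq' : PowerSeries.constantCoeff (q : PowerSeries F) ≠ 0 := by
    simpa using hq
  have hne : ((q : PowerSeries F) : LaurentSeries F) ≠ 0 := by
    intro h
    have : (q : PowerSeries F) = 0 :=
      HahnSeries.ofPowerSeries_injective (Γ := ℤ) (by simpa using h)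
    exact hq' (by simp [this])
  have key : algebraMap (RatFunc F) (LaurentSeries F)
      (algebraMap F[X] (RatFunc F) p / algebraMap F[X] (RatFunc F) q) =
      (((p : PowerSeries F) * (q : PowerSeries F)⁻¹ : PowerSeries F) : LaurentSeries F) := by
    have hp' := RatFunc.coe_coe p
    have hq'' := RatFunc.coe_coe q
    simp only [RatFunc.coePolynomial] at hp' hq''
    rw [map_div₀, ← hp', ← hq'', div_eq_iff hne, ← map_mul, mul_assoc,
      PowerSeries.inv_mul_cancel _ hq', mul_one]
  have h0 := LaurentSeries.coeff_coe_powerSeries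
    ((p : PowerSeries F) * (q : PowerSeries F)⁻¹ : PowerSeries F) 0
  rw [laurentCoeffZero, key]
  simpa [div_eq_mul_inv] using h0

theorem laurentCoeffZero_zpow {F : Type*} [Field F] (j : ℤ) :
    laurentCoeffZero (RatFunc.X ^ j : RatFunc F) = if j = 0 then 1 else 0 := by
  rw [laurentCoeffZero, map_zpow₀, RatFunc.coe_X, ← RatFunc.single_zpow, HahnSeries.coeff_single]
  simp [eq_comm]

theorem laurentCoeffZero_add {F : Type*} [Field F] (f g : RatFunc F) :
    laurentCoeffZero (f + g) = laurentCoeffZero f + laurentCoeffZero g := by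
  simp [laurentCoeffZero]

open scoped RatFunc in
theorem laurentCoeffZero_smul {F : Type*} [Field F] (c : F) (f : RatFunc F) :
    laurentCoeffZero (c • f) = c * laurentCoeffZero f := by
  have hC : algebraMap (RatFunc F) (LaurentSeries F) (RatFunc.C c) = HahnSeries.C c := by
    rw [← RatFunc.algebraMap_C, ← IsScalarTower.algebraMap_apply]
    simp
  rw [laurentCoeffZero, RatFunc.smul_eq_C_mul, map_mul, hC, HahnSeries.C_mul_eq_smul,
    HahnSeries.coeff_smul, smul_eq_mul, laurentCoeffZero]

/-- The K-theoretic residue as a linear functional. -/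
noncomputable def rhoKLinear {F : Type*} [Field F] (ι : RatFunc F ≃ₐ[F] RatFunc F) :
    RatFunc F →ₗ[F] F where
  toFun := rhoK ι
  map_add' f g := by
    simp only [rhoK, map_add, laurentCoeffZero_add]
    ring
  map_smul' c f := by
    simp only [rhoK, map_smul, laurentCoeffZero_smul, RingHom.id_apply, smul_eq_mul]
    ring

theorem one_sub_X_pow_ne_zero {F : Type*} [Field F] {n : ℕ} (hn : 1 ≤ n) :
    (1 - RatFunc.X ^ n : RatFunc F) ≠ 0 := by
  have h : (1 - Polynomial.X ^ n : Polynomial F) ≠ 0 := by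
    intro h
    have := congrArg (fun p => Polynomial.coeff p 0) h
    simp [Polynomial.coeff_X_pow, (by lia : 0 ≠ n)] at this
  simpa using (RatFunc.algebraMap_ne_zero h)

theorem rhoK_zpow {F : Type*} [Field F] (ι : RatFunc F ≃ₐ[F] RatFunc F)
    (hι : ι RatFunc.X = RatFunc.X⁻¹) (j : ℤ) : rhoK ι (RatFunc.X ^ j) = 0 := by
  rw [rhoK, map_zpow₀, hι, inv_zpow', laurentCoeffZero_zpow, laurentCoeffZero_zpow]
  simp

theorem rhoK_normalization {F : Type*} [Field F] (ι : RatFunc F ≃ₐ[F] RatFunc F)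
    (hι : ι RatFunc.X = RatFunc.X⁻¹) {n : ℕ} (hn : 1 ≤ n) (k a : ℕ) (ha : a < n) :
    rhoK ι (RatFunc.X ^ (n * k + a) / (1 - RatFunc.X ^ n) ^ (k + 1)) =
      if k = 0 ∧ a = 0 then 1 else 0 := by
  have h₀ : laurentCoeffZero
      (RatFunc.X ^ (n * k + a) / (1 - RatFunc.X ^ n) ^ (k + 1) : RatFunc F) =
      if k = 0 ∧ a = 0 then 1 else 0 := by
    have := laurentCoeffZero_div (F := F) (Polynomial.X ^ (n * k + a))
      ((1 - Polynomial.X ^ n) ^ (k + 1))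
      (by simp [Polynomial.coeff_zero_eq_eval_zero, (by lia : n ≠ 0)])
    simp only [map_pow, map_sub, map_one, RatFunc.algebraMap_X] at this
    rw [this]
    simp [Polynomial.coeff_zero_eq_eval_zero, (by lia : n ≠ 0), zero_pow_eq]
  have hX : (RatFunc.X : RatFunc F) ≠ 0 := RatFunc.X_ne_zero
  have hι' : ι (RatFunc.X ^ (n * k + a) / (1 - RatFunc.X ^ n) ^ (k + 1)) =
      RatFunc.X ^ (n - a) / (RatFunc.X ^ n - 1) ^ (k + 1) := by
    have h : (1 - RatFunc.X⁻¹ ^ n : RatFunc F) = (RatFunc.X ^ n - 1) / RatFunc.X ^ n := by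
      rw [sub_div, div_self (pow_ne_zero _ hX), inv_pow, one_div]
    simp only [map_div₀, map_pow, map_sub, map_one, hι]
    rw [h, div_pow, inv_pow, ← pow_mul, div_div_eq_mul_div]
    congr 1
    rw [inv_mul_eq_iff_eq_mul₀ (pow_ne_zero _ hX), ← pow_add]
    congr 1
    rw [mul_add]
    lia
  have h₁ : laurentCoeffZero
      (RatFunc.X ^ (n - a) / (RatFunc.X ^ n - 1) ^ (k + 1) : RatFunc F) = 0 := by
    have := laurentCoeffZero_div (F := F) (Polynomial.X ^ (n - a))
      ((Polynomial.X ^ n - 1) ^ (k + 1))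
      (by simp [Polynomial.coeff_zero_eq_eval_zero, (by lia : n ≠ 0)])
    simp only [map_pow, map_sub, map_one, RatFunc.algebraMap_X] at this
    rw [this]
    simp [Polynomial.coeff_zero_eq_eval_zero, (by lia : n - a ≠ 0)]
  rw [rhoK, hι', h₀, h₁, sub_zero]

/-- A linear subspace containing all `z ^ j` and all `z ^ (n * k + a) / (1 - z ^ n) ^ (k + 1)`
contains every `z ^ j / (1 - z ^ n) ^ k`. -/
theorem zpow_div_mem {F : Type*} [Field F] (W : Submodule F (RatFunc F))
    (hW₁ : ∀ j : ℤ, (RatFunc.X ^ j : RatFunc F) ∈ W) {n : ℕ} (hn : 1 ≤ n)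
    (hW₂ : ∀ k a : ℕ, a < n →
      (RatFunc.X ^ (n * k + a) / (1 - RatFunc.X ^ n) ^ (k + 1) : RatFunc F) ∈ W)
    (k : ℕ) (j : ℤ) : (RatFunc.X ^ j / (1 - RatFunc.X ^ n) ^ k : RatFunc F) ∈ W := by
  induction k generalizing j with
  | zero => simpa using hW₁ j
  | succ k ih =>
    have hX : (RatFunc.X : RatFunc F) ≠ 0 := RatFunc.X_ne_zero
    have hne := one_sub_X_pow_ne_zero (F := F) hn
    have step (j : ℤ) : (RatFunc.X ^ j / (1 - RatFunc.X ^ n) ^ (k + 1) : RatFunc F) ∈ W ↔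
        (RatFunc.X ^ (j + n) / (1 - RatFunc.X ^ n) ^ (k + 1) : RatFunc F) ∈ W := by
      have h : (RatFunc.X ^ j / (1 - RatFunc.X ^ n) ^ (k + 1) : RatFunc F) =
          RatFunc.X ^ j / (1 - RatFunc.X ^ n) ^ k +
            RatFunc.X ^ (j + n) / (1 - RatFunc.X ^ n) ^ (k + 1) := by
        rw [zpow_add₀ hX, zpow_natCast]
        field_simp
        ring
      rw [h]
      exact W.add_mem_iff_right (ih j)
    have shift (a : ℤ) (i : ℤ) :
        (RatFunc.X ^ (a + n * i) / (1 - RatFunc.X ^ n) ^ (k + 1) : RatFunc F) ∈ W ↔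
          (RatFunc.X ^ a / (1 - RatFunc.X ^ n) ^ (k + 1) : RatFunc F) ∈ W := by
      induction i with
      | zero => simp
      | succ i hi => rw [← hi, step (a + n * i), mul_add, mul_one, add_assoc]
      | pred i hi =>
        rw [← hi, step (a + n * (-i - 1))]
        ring_nf
    have hn' : (n : ℤ) ≠ 0 := by lia
    have h := hW₂ k (j % n).toNat (by have := Int.emod_lt_of_pos j (b := n) (by lia); lia)
    rw [← zpow_natCast, Nat.cast_add, Int.toNat_of_nonneg (Int.emod_nonneg j hn'), add_comm,
      Nat.cast_mul, shift] at h
    rw [← Int.emod_add_mul_ediv j n, shift]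
    exact h

theorem laurentPolynomial_div_mem {F : Type*} [Field F] (W : Submodule F (RatFunc F))
    (d : RatFunc F) (hW : ∀ j : ℤ, (RatFunc.X ^ j / d : RatFunc F) ∈ W) {p : RatFunc F}
    (hp : p ∈ Algebra.adjoin F ({RatFunc.X, RatFunc.X⁻¹} : Set (RatFunc F))) : p / d ∈ W := by
  have hX : (RatFunc.X : RatFunc F) ≠ 0 := RatFunc.X_ne_zero
  rw [← Subalgebra.mem_toSubmodule, Algebra.adjoin_eq_span] at hp
  induction hp using Submodule.span_induction with
  | mem x hx =>
    obtain ⟨j, rfl⟩ : ∃ j : ℤ, x = RatFunc.X ^ j := by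
      induction hx using Submonoid.closure_induction with
      | mem x hx =>
        rcases hx with rfl | rfl
        · exact ⟨1, by simp⟩
        · exact ⟨-1, by simp⟩
      | one => exact ⟨0, by simp⟩
      | mul x y _ _ hx hy =>
        obtain ⟨i, rfl⟩ := hx
        obtain ⟨j, rfl⟩ := hy
        exact ⟨i + j, (zpow_add₀ hX i j).symm⟩
    exact hW j
  | zero => simp
  | add x y _ _ hx hy => rw [add_div]; exact W.add_mem hx hy
  | smul c x _ hx => rw [smul_div_assoc]; exact W.smul_mem c hx

/-- Raising a denominator `(1 - z ^ n) ^ k` to `(1 - z ^ (n * m)) ^ (k + l)`. -/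
theorem mul_one_sub_pow_mem {R A : Type*} [CommRing R] [CommRing A] [Algebra R A]
    (L : Subalgebra R A) {x f : A} (hx : x ∈ L) {n k : ℕ}
    (h : f * (1 - x ^ n) ^ k ∈ L) (m l : ℕ) : f * (1 - x ^ (n * m)) ^ (k + l) ∈ L := by
  have hs : (1 - x ^ n) * (∑ i ∈ Finset.range m, (x ^ n) ^ i) = 1 - x ^ (n * m) := by
    rw [mul_neg_geom_sum, pow_mul]
  have hs' : ∑ i ∈ Finset.range m, (x ^ n) ^ i ∈ L :=
    sum_mem fun i _ => pow_mem (pow_mem hx n) i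
  have hl : 1 - x ^ (n * m) ∈ L := sub_mem L.one_mem (pow_mem hx _)
  rw [pow_add, ← mul_assoc]
  refine mul_mem ?_ (pow_mem hl l)
  rw [← hs, mul_pow, ← mul_assoc]
  exact mul_mem h (pow_mem hs' k)

theorem exists_mul_one_sub_pow_mem {F : Type*} [Field F] {f : RatFunc F}
    (hf : f ∈ Algebra.adjoin F ({RatFunc.X, RatFunc.X⁻¹} ∪
      {g : RatFunc F | ∃ n : ℕ, 1 ≤ n ∧ g = (1 - RatFunc.X ^ n)⁻¹})) :
    ∃ n k : ℕ, 1 ≤ n ∧ f * (1 - RatFunc.X ^ n) ^ k ∈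
      Algebra.adjoin F ({RatFunc.X, RatFunc.X⁻¹} : Set (RatFunc F)) := by
  have hX : (RatFunc.X : RatFunc F) ∈
      Algebra.adjoin F ({RatFunc.X, RatFunc.X⁻¹} : Set (RatFunc F)) :=
    Algebra.subset_adjoin (by simp)
  induction hf using Algebra.adjoin_induction with
  | mem x hx =>
    rcases hx with hx | ⟨n, hn, rfl⟩
    · exact ⟨1, 0, le_rfl, by simpa using Algebra.subset_adjoin hx⟩
    · refine ⟨n, 1, hn, ?_⟩
      rw [pow_one, inv_mul_cancel₀ (one_sub_X_pow_ne_zero hn)]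
      exact one_mem _
  | algebraMap r =>
    exact ⟨1, 0, le_rfl, by rw [pow_zero, mul_one]; exact Subalgebra.algebraMap_mem _ r⟩
  | add x y _ _ hx hy =>
    obtain ⟨n, k, hn, hx⟩ := hx
    obtain ⟨m, l, hm, hy⟩ := hy
    refine ⟨n * m, k + l, Nat.mul_pos hn hm, ?_⟩
    rw [add_mul]
    refine add_mem (mul_one_sub_pow_mem _ hX hx m l) ?_
    rw [mul_comm n m, add_comm k l]
    exact mul_one_sub_pow_mem _ hX hy n k
  | mul x y _ _ hx hy =>
    obtain ⟨n, k, hn, hx⟩ := hx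
    obtain ⟨m, l, hm, hy⟩ := hy
    refine ⟨n * m, k + l, Nat.mul_pos hn hm, ?_⟩
    have h₁ := mul_one_sub_pow_mem _ hX hx m 0
    have h₂ := mul_one_sub_pow_mem _ hX hy n 0
    rw [mul_comm m n] at h₂
    rw [pow_add, mul_mul_mul_comm]
    exact mul_mem h₁ h₂

set_option synthInstance.maxHeartbeats 1000000 in
set_option maxHeartbeats 1000000 in
/-- Over a characteristic-zero field containing primitive `n`-th roots of
unity for all `n ≥ 1`, any `F`-linear functional `ρ` on the subalgebra
`V = F⟨z, z⁻¹, (1-zⁿ)⁻¹ (n ≥ 1)⟩ ⊆ F(z)` which vanishes on all powers `z^j` and satisfies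
the normalization `ρ(z^{nk+a}/(1-zⁿ)^{k+1}) = δ_{k,0}δ_{a,0}` agrees with `ρ_K` on `V`;
i.e. `ρ_K` is the unique residue map for the K-theory of Deligne–Mumford stacks. -/
theorem stmt_12 {F : Type*} [Field F] [CharZero F]
    (hroots : ∀ n : ℕ, 1 ≤ n → ∃ γ : F, IsPrimitiveRoot γ n)
    (ι : RatFunc F ≃ₐ[F] RatFunc F) (hι : ι RatFunc.X = RatFunc.X⁻¹)
    (V : Subalgebra F (RatFunc F))
    (hV : V = Algebra.adjoin F ({RatFunc.X, RatFunc.X⁻¹} ∪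
      {g : RatFunc F | ∃ n : ℕ, 1 ≤ n ∧ g = (1 - RatFunc.X ^ n)⁻¹}))
    (ρ : V →ₗ[F] F)
    (hρ₁ : ∀ (j : ℤ) (h : (RatFunc.X ^ j : RatFunc F) ∈ V), ρ ⟨RatFunc.X ^ j, h⟩ = 0)
    (hρ₂ : ∀ n : ℕ, 1 ≤ n → ∀ k a : ℕ, a < n →
      ∀ h : (RatFunc.X ^ (n * k + a) / (1 - RatFunc.X ^ n) ^ (k + 1) : RatFunc F) ∈ V,
      ρ ⟨RatFunc.X ^ (n * k + a) / (1 - RatFunc.X ^ n) ^ (k + 1), h⟩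
        = if k = 0 ∧ a = 0 then 1 else 0)
    (f : RatFunc F) (hf : f ∈ V) :
    ρ ⟨f, hf⟩ = rhoK ι f := by
  have hXV : (RatFunc.X : RatFunc F) ∈ V := hV ▸ Algebra.subset_adjoin (by simp)
  have hXV' : (RatFunc.X⁻¹ : RatFunc F) ∈ V := hV ▸ Algebra.subset_adjoin (by simp)
  have hinv (n : ℕ) (hn : 1 ≤ n) : ((1 - RatFunc.X ^ n)⁻¹ : RatFunc F) ∈ V :=
    hV ▸ Algebra.subset_adjoin (Or.inr ⟨n, hn, rfl⟩)
  let W : Submodule F (RatFunc F) :=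
    (LinearMap.ker (ρ - (rhoKLinear ι).comp V.val.toLinearMap)).map V.val.toLinearMap
  have hW {g : RatFunc F} (hg : g ∈ V) : g ∈ W ↔ ρ ⟨g, hg⟩ = rhoK ι g := by
    constructor
    · rintro ⟨⟨g', hg'⟩, h, rfl⟩
      exact sub_eq_zero.1 h
    · intro h
      exact ⟨⟨g, hg⟩, sub_eq_zero.2 h, rfl⟩
  have hW₁ (j : ℤ) : (RatFunc.X ^ j : RatFunc F) ∈ W := by
    have hj : (RatFunc.X ^ j : RatFunc F) ∈ V := by
      obtain ⟨m, rfl | rfl⟩ := j.eq_nat_or_neg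
      · simpa using pow_mem hXV m
      · simpa using pow_mem hXV' m
    rw [hW hj, hρ₁, rhoK_zpow ι hι]
  have hW₂ (n : ℕ) (hn : 1 ≤ n) (k a : ℕ) (ha : a < n) :
      (RatFunc.X ^ (n * k + a) / (1 - RatFunc.X ^ n) ^ (k + 1) : RatFunc F) ∈ W := by
    have h : (RatFunc.X ^ (n * k + a) / (1 - RatFunc.X ^ n) ^ (k + 1) : RatFunc F) ∈ V := by
      rw [div_eq_mul_inv, ← inv_pow]
      exact mul_mem (pow_mem hXV _) (pow_mem (hinv n hn) _)
    rw [hW h, hρ₂ n hn k a ha, rhoK_normalization ι hι hn k a ha]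
  obtain ⟨n, k, hn, hp⟩ := exists_mul_one_sub_pow_mem (hV ▸ hf)
  have h := laurentPolynomial_div_mem W ((1 - RatFunc.X ^ n) ^ k)
    (zpow_div_mem W hW₁ hn (hW₂ n hn) k) hp
  rw [mul_div_cancel_right₀ _ (pow_ne_zero _ (one_sub_X_pow_ne_zero hn))] at h
  exact (hW hf).1 h
end

section
/- Define a product on the graded ℚ-vector space ⊕_{n≥0} S_n^± by f * g := Y(f,1)g = (1/(a!·b!)) Σ_{σ ∈ S_{a+b}} σ·( f(s₁,…,s_a)·g(s_{a+1},…,s_{a+b}) ) for f ∈ S_a^±, g ∈ S_b^±. Then this product is ℚ-bilinear, associative, commutative, graded (f * g ∈ S_{a+b}^±), and has the element 1 ∈ S_0^± = ℚ as a two-sided unit; hence ⊕_{n≥0} S_n^± is a commutative graded ℚ-algebra. -/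
open scoped BigOperators

noncomputable section

/-- `L n` is the ring of Laurent polynomials over `ℚ` in the `n` variables `s₁, …, s_n`,
realized as the monoid algebra of the exponent group `Fin n → ℤ`. -/
abbrev L (n : ℕ) : Type := AddMonoidAlgebra ℚ (Fin n → ℤ)

/-- `LL n A` is the ring of Laurent polynomials over `ℚ` in the variables `s₁, …, s_n`
together with extra formal variables whose exponents lie in the abelian group `A`
(e.g. `A = ℤ` for one variable `z`, `A = ℤ × ℤ` for two variables `z, w`). -/
abbrev LL (n : ℕ) (A : Type) [AddCommGroup A] : Type :=
  AddMonoidAlgebra ℚ ((Fin n → ℤ) × A)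

/-- The ring homomorphism between monoid algebras induced by a map of exponent groups. -/
def mdr {G H : Type} [AddCommMonoid G] [AddCommMonoid H] (f : G →+ H) :
    AddMonoidAlgebra ℚ G →+* AddMonoidAlgebra ℚ H :=
  AddMonoidAlgebra.mapDomainRingHom ℚ f

/-- The action of a permutation `σ` of the variables on exponents: `s_i ↦ s_{σ(i)}`. -/
def permHomL {n : ℕ} (σ : Equiv.Perm (Fin n)) : (Fin n → ℤ) →+ (Fin n → ℤ) :=
  AddMonoidHom.mk' (fun μ => μ ∘ σ.symm) (fun _ _ => rfl)

/-- The action of a permutation of the variables `s₁, …, s_n` on `L n`. -/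
def permL {n : ℕ} (σ : Equiv.Perm (Fin n)) : L n →+* L n := mdr (permHomL σ)

/-- A Laurent polynomial in `s₁, …, s_n` is symmetric if it is fixed by all permutations
of the variables; `SymmLaurent f` says `f ∈ S_n^±`. -/
def SymmLaurent {n : ℕ} (f : L n) : Prop := ∀ σ : Equiv.Perm (Fin n), permL σ f = f

/-- Permutations act on `LL n A` through the `s`-exponents only. -/
def permHomLL {n : ℕ} {A : Type} [AddCommGroup A] (σ : Equiv.Perm (Fin n)) :
    ((Fin n → ℤ) × A) →+ ((Fin n → ℤ) × A) :=
  AddMonoidHom.mk' (fun p => (p.1 ∘ σ.symm, p.2)) (fun _ _ => rfl)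

/-- The action of a permutation of the variables on `LL n A`. -/
def permLL {n : ℕ} {A : Type} [AddCommGroup A] (σ : Equiv.Perm (Fin n)) :
    LL n A →+* LL n A := mdr (permHomLL σ)

/-- Extension by zero of an exponent vector on the first `a` of `a + b` variables. -/
def extA (a b : ℕ) (μ : Fin a → ℤ) : Fin (a + b) → ℤ :=
  fun i => if h : (i : ℕ) < a then μ ⟨i, h⟩ else 0

/-- Extension by zero of an exponent vector on the last `b` of `a + b` variables. -/
def extB (a b : ℕ) (ν : Fin b → ℤ) : Fin (a + b) → ℤ :=
  fun i => if _ : (i : ℕ) < a then 0 else ν ⟨(i : ℕ) - a, by have := i.isLt; omega⟩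

lemma extA_add (a b : ℕ) (μ ν : Fin a → ℤ) :
    extA a b (μ + ν) = extA a b μ + extA a b ν := by
  funext i
  simp only [extA, Pi.add_apply]
  split <;> simp

lemma extB_add (a b : ℕ) (μ ν : Fin b → ℤ) :
    extB a b (μ + ν) = extB a b μ + extB a b ν := by
  funext i
  simp only [extB, Pi.add_apply]
  split <;> simp

/-- On exponents, the substitution `f(s₁,…,s_a) ↦ f(z s₁, …, z s_a)` followed by the
inclusion into the first `a` of `a + b` variables: a monomial `s^μ z^α` is sent to
`s^(extA μ) z^(α + (Σᵢ μᵢ)·zv)`, where `zv : A` is the exponent vector of `z`. -/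
def zinjHom {A : Type} [AddCommGroup A] (zv : A) (a b : ℕ) :
    ((Fin a → ℤ) × A) →+ ((Fin (a + b) → ℤ) × A) :=
  AddMonoidHom.mk' (fun p => (extA a b p.1, p.2 + (∑ i, p.1 i) • zv))
    (by
      intro p q
      refine Prod.ext (extA_add a b p.1 q.1) ?_
      simp only [Prod.snd_add]
      show p.2 + q.2 + (∑ i, (p.1 i + q.1 i)) • zv = _
      rw [Finset.sum_add_distrib, add_smul]
      abel)

/-- On exponents, the inclusion of the last `b` of `a + b` variables. -/
def winjHom {A : Type} [AddCommGroup A] (a b : ℕ) :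
    ((Fin b → ℤ) × A) →+ ((Fin (a + b) → ℤ) × A) :=
  AddMonoidHom.mk' (fun p => (extB a b p.1, p.2))
    (fun p q => Prod.ext (extB_add a b p.1 q.1) rfl)

/-- The inclusion `L n → LL n A` (no formal-variable exponents). -/
def inclz (A : Type) [AddCommGroup A] {n : ℕ} : L n →+* LL n A :=
  mdr (AddMonoidHom.inl (Fin n → ℤ) A)

/-- The vertex operation
`Y(f,z)g = (1/(a!·b!)) Σ_{σ ∈ S_{a+b}} σ·(f(z s₁,…,z s_a)·g(s_{a+1},…,s_{a+b}))`,
where the formal variable `z` has exponent vector `zv : A` and `Y` acts coefficientwise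
on Laurent-polynomial coefficients in additional formal variables. -/
def Yop {A : Type} [AddCommGroup A] (zv : A) {a b : ℕ}
    (f : LL a A) (g : LL b A) : LL (a + b) A :=
  ((a.factorial * b.factorial : ℚ))⁻¹ •
    ∑ σ : Equiv.Perm (Fin (a + b)),
      permLL σ (mdr (zinjHom zv a b) f * mdr (winjHom a b) g)

/-- Relabelling of the variables along an equality `m = n` of their number. -/
def reindexEquiv (A : Type) [AddCommGroup A] {m n : ℕ} (h : m = n) :
    ((Fin m → ℤ) × A) ≃+ ((Fin n → ℤ) × A) where
  toFun p := (p.1 ∘ (finCongr h).symm, p.2)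
  invFun p := (p.1 ∘ (finCongr h), p.2)
  left_inv p := by
    refine Prod.ext ?_ rfl
    funext i
    simp [Function.comp]
  right_inv p := by
    refine Prod.ext ?_ rfl
    funext i
    simp [Function.comp]
  map_add' _ _ := rfl

/-- The canonical identification `LL m A ≃ LL n A` for `m = n`. -/
def reindex (A : Type) [AddCommGroup A] {m n : ℕ} (h : m = n) :
    LL m A →+* LL n A := mdr (reindexEquiv A h).toAddMonoidHom

/-- The operator `z^{deg}`, multiplying each monomial `s₁^{μ₁}⋯s_n^{μ_n}` by
`z^{μ₁+⋯+μ_n}` (with `A = ℤ` recording the exponent of the single variable `z`). -/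
def zdegOp {n : ℕ} : LL n ℤ →+* LL n ℤ :=
  mdr (AddMonoidHom.mk' (fun p => (p.1, p.2 + ∑ i, p.1 i))
    (by
      intro p q
      refine Prod.ext rfl ?_
      simp only [Prod.snd_add]
      show p.2 + q.2 + ∑ i, (p.1 i + q.1 i) = p.2 + ∑ i, p.1 i + (q.2 + ∑ i, q.1 i)
      rw [Finset.sum_add_distrib]
      ring))

end

noncomputable section

/-- The product `f * g := Y(f,1)g
  = (1/(a!·b!)) Σ_{σ ∈ S_{a+b}} σ·(f(s₁,…,s_a)·g(s_{a+1},…,s_{a+b}))`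
on the graded space `⊕_{n≥0} S_n^±` (the specialization of the vertex operation at
`z = 1`). -/
def mulOp {a b : ℕ} (f : L a) (g : L b) : L (a + b) :=
  ((a.factorial * b.factorial : ℚ))⁻¹ •
    ∑ σ : Equiv.Perm (Fin (a + b)),
      permL σ (mdr (AddMonoidHom.mk' (extA a b) (extA_add a b)) f *
               mdr (AddMonoidHom.mk' (extB a b) (extB_add a b)) g)

/-- Relabelling of the variables of `L m` along an equality `m = n`. -/
def reindexL {m n : ℕ} (h : m = n) : L m →+* L n :=
  mdr (AddMonoidHom.mk' (fun μ => μ ∘ (finCongr h).symm) (fun _ _ => rfl))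

end

noncomputable section

/-- The map on exponents induced by the substitution of variables `s_i ↦ s_{e(i)}`. -/
def pushHom {m n : ℕ} (e : Fin m → Fin n) : (Fin m → ℤ) →+ (Fin n → ℤ) where
  toFun μ j := ∑ i, if e i = j then μ i else 0
  map_zero' := by ext j; simp
  map_add' μ ν := by
    ext j
    simp only [Pi.add_apply, ← Finset.sum_add_distrib]
    exact Finset.sum_congr rfl fun i _ => by split <;> simp

/-- The substitution of variables `s_i ↦ s_{e(i)}` on Laurent polynomials. -/
def rename {m n : ℕ} (e : Fin m → Fin n) : L m →+* L n := mdr (pushHom e)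

end

lemma mdr_mdr {G H K : Type} [AddCommMonoid G] [AddCommMonoid H] [AddCommMonoid K]
    (f : H →+ K) (g : G →+ H) (x : AddMonoidAlgebra ℚ G) :
    mdr f (mdr g x) = mdr (f.comp g) x := by
  simp only [mdr, AddMonoidAlgebra.mapDomainRingHom_comp, RingHom.comp_apply]

lemma mdr_smul {G H : Type} [AddCommMonoid G] [AddCommMonoid H] (f : G →+ H) (q : ℚ)
    (x : AddMonoidAlgebra ℚ G) : mdr f (q • x) = q • mdr f x :=
  map_rat_smul (mdr f) q x

lemma pushHom_apply_of_injective {m n : ℕ} {e : Fin m → Fin n} (he : Function.Injective e)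
    (μ : Fin m → ℤ) (i : Fin m) : pushHom e μ (e i) = μ i := by
  simp [pushHom, he.eq_iff]

lemma pushHom_apply_of_notMem_range {m n : ℕ} {e : Fin m → Fin n} (μ : Fin m → ℤ) {j : Fin n}
    (hj : ∀ i, e i ≠ j) : pushHom e μ j = 0 := by
  simp [pushHom, hj]

lemma pushHom_comp {m n k : ℕ} (e : Fin n → Fin k) (d : Fin m → Fin n) :
    (pushHom e).comp (pushHom d) = pushHom (e ∘ d) := by
  refine AddMonoidHom.ext fun μ => ?_
  funext j
  change (∑ i, if e i = j then ∑ l, (if d l = i then μ l else 0) else 0)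
    = ∑ l, if e (d l) = j then μ l else 0
  have h : ∀ i, (if e i = j then ∑ l, (if d l = i then μ l else 0) else 0)
      = ∑ l, if d l = i then (if e i = j then μ l else 0) else 0 := fun i => by
    split <;> simp
  simp only [h]
  rw [Finset.sum_comm]
  simp

lemma rename_rename {m n k : ℕ} (e : Fin n → Fin k) (d : Fin m → Fin n) (x : L m) :
    rename e (rename d x) = rename (e ∘ d) x := by
  rw [rename, rename, mdr_mdr, pushHom_comp, rename]

lemma rename_smul {m n : ℕ} (e : Fin m → Fin n) (q : ℚ) (x : L m) :
    rename e (q • x) = q • rename e x :=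
  mdr_smul _ q x

lemma pushHom_equiv {m n : ℕ} (e : Fin m ≃ Fin n) (μ : Fin m → ℤ) :
    pushHom e μ = μ ∘ e.symm := by
  funext j
  obtain ⟨i, rfl⟩ := e.surjective j
  simp [pushHom_apply_of_injective e.injective]

lemma permL_eq_rename {n : ℕ} (σ : Equiv.Perm (Fin n)) : permL σ = rename σ := by
  rw [permL, rename]
  congr 1
  refine AddMonoidHom.ext fun μ => ?_
  exact (pushHom_equiv σ μ).symm

lemma reindexL_eq_rename {m n : ℕ} (h : m = n) : reindexL h = rename (finCongr h) := by
  rw [reindexL, rename]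
  congr 1
  refine AddMonoidHom.ext fun μ => ?_
  exact (pushHom_equiv (finCongr h) μ).symm

lemma mdr_extA_eq_rename (a b : ℕ) :
    mdr (AddMonoidHom.mk' (extA a b) (extA_add a b)) = rename (Fin.castAdd b) := by
  rw [rename]
  congr 1
  refine AddMonoidHom.ext fun μ => ?_
  funext j
  refine Fin.addCases (fun i => ?_) (fun i => ?_) j
  · rw [pushHom_apply_of_injective (Fin.castAdd_injective a b)]
    simp [extA]
  · rw [pushHom_apply_of_notMem_range]
    · simp [extA]
    · intro l h
      have := congrArg Fin.val h
      simp at this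
      omega

lemma mdr_extB_eq_rename (a b : ℕ) :
    mdr (AddMonoidHom.mk' (extB a b) (extB_add a b)) = rename (Fin.natAdd a) := by
  rw [rename]
  congr 1
  refine AddMonoidHom.ext fun μ => ?_
  funext j
  refine Fin.addCases (fun i => ?_) (fun i => ?_) j
  · rw [pushHom_apply_of_notMem_range]
    · simp [extB]
    · intro l h
      have := congrArg Fin.val h
      simp at this
      omega
  · rw [pushHom_apply_of_injective (Fin.natAdd_injective b a)]
    simp [extB]

noncomputable section

/-- The sum of all permutations of the variables of a Laurent polynomial. -/
def symmSum {n : ℕ} (x : L n) : L n := ∑ σ : Equiv.Perm (Fin n), rename σ x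

/-- The product of two Laurent polynomials in disjoint sets of variables. -/
def concat {a b : ℕ} (f : L a) (g : L b) : L (a + b) :=
  rename (Fin.castAdd b) f * rename (Fin.natAdd a) g

end

lemma mulOp_eq {a b : ℕ} (f : L a) (g : L b) :
    mulOp f g = (a.factorial * b.factorial : ℚ)⁻¹ • symmSum (concat f g) := by
  simp only [mulOp, symmSum, concat, permL_eq_rename, mdr_extA_eq_rename, mdr_extB_eq_rename]

lemma symmSum_add {n : ℕ} (x y : L n) : symmSum (x + y) = symmSum x + symmSum y := by
  simp only [symmSum, map_add, Finset.sum_add_distrib]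

lemma symmSum_smul {n : ℕ} (q : ℚ) (x : L n) : symmSum (q • x) = q • symmSum x := by
  simp only [symmSum, rename_smul, Finset.smul_sum]

lemma symmSum_sum {n : ℕ} {ι : Type*} (s : Finset ι) (x : ι → L n) :
    symmSum (∑ i ∈ s, x i) = ∑ i ∈ s, symmSum (x i) := by
  simp only [symmSum, map_sum]
  exact Finset.sum_comm

lemma concat_smul_left {a b : ℕ} (q : ℚ) (f : L a) (g : L b) :
    concat (q • f) g = q • concat f g := by
  simp only [concat, rename_smul, smul_mul_assoc]

lemma concat_smul_right {a b : ℕ} (q : ℚ) (f : L a) (g : L b) :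
    concat f (q • g) = q • concat f g := by
  simp only [concat, rename_smul, mul_smul_comm]

/-- Symmetrization does not see the choice of the bijection used to relabel the variables. -/
lemma rename_symmSum {m n : ℕ} (e d : Fin m ≃ Fin n) (x : L m) :
    rename e (symmSum x) = symmSum (rename d x) := by
  simp only [symmSum, map_sum, rename_rename]
  refine Fintype.sum_equiv ((Equiv.refl (Fin m)).equivCongr e |>.trans
    (d.equivCongr (Equiv.refl (Fin n)))) _ _ fun σ => ?_
  congr 2
  funext i
  simp [Equiv.equivCongr]

lemma rename_id {n : ℕ} (x : L n) : rename id x = x := by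
  have h : pushHom (id : Fin n → Fin n) = AddMonoidHom.id _ :=
    AddMonoidHom.ext fun μ => pushHom_equiv (Equiv.refl (Fin n)) μ
  rw [rename, h, mdr, AddMonoidAlgebra.mapDomainRingHom_id, RingHom.id_apply]

lemma symmSum_rename {n : ℕ} (τ : Equiv.Perm (Fin n)) (x : L n) :
    symmSum (rename τ x) = symmSum x := by
  rw [← rename_symmSum (Equiv.refl _) τ, Equiv.coe_refl, rename_id]

lemma concat_rename {a b : ℕ} (σ : Equiv.Perm (Fin a)) (τ : Equiv.Perm (Fin b))
    (f : L a) (g : L b) :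
    concat (rename σ f) (rename τ g)
      = rename (finSumFinEquiv.permCongr (σ.sumCongr τ)) (concat f g) := by
  simp only [concat, map_mul, rename_rename]
  congr 3 <;> · funext i; simp [Equiv.permCongr_apply]

lemma symmSum_concat_symmSum_left {a b : ℕ} (f : L a) (g : L b) :
    symmSum (concat (symmSum f) g) = (a.factorial : ℚ) • symmSum (concat f g) := by
  have h : concat (symmSum f) g
      = ∑ σ : Equiv.Perm (Fin a), concat (rename σ f) (rename (Equiv.refl (Fin b)) g) := by
    simp only [concat, symmSum, map_sum, Finset.sum_mul, Equiv.coe_refl, rename_id]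
  simp only [h, symmSum_sum, concat_rename, symmSum_rename, Finset.sum_const, Finset.card_univ,
    Fintype.card_perm, Fintype.card_fin, Nat.cast_smul_eq_nsmul]

lemma symmSum_concat_symmSum_right {a b : ℕ} (f : L a) (g : L b) :
    symmSum (concat f (symmSum g)) = (b.factorial : ℚ) • symmSum (concat f g) := by
  have h : concat f (symmSum g)
      = ∑ τ : Equiv.Perm (Fin b), concat (rename (Equiv.refl (Fin a)) f) (rename τ g) := by
    simp only [concat, symmSum, map_sum, Finset.mul_sum, Equiv.coe_refl, rename_id]
  simp only [h, symmSum_sum, concat_rename, symmSum_rename, Finset.sum_const, Finset.card_univ,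
    Fintype.card_perm, Fintype.card_fin, Nat.cast_smul_eq_nsmul]

lemma rename_concat_assoc {a b c : ℕ} (f : L a) (g : L b) (h : L c) :
    rename (finCongr (Nat.add_assoc a b c)) (concat (concat f g) h)
      = concat f (concat g h) := by
  have hr : finCongr (Nat.add_assoc a b c) ∘ Fin.natAdd (a + b)
      = Fin.natAdd a ∘ Fin.natAdd b := by
    funext i
    ext
    simp [Nat.add_assoc]
  simp only [concat, map_mul, rename_rename, mul_assoc, hr]
  rfl

lemma rename_concat_flip {a b : ℕ} (f : L a) (g : L b) :
    rename (finAddFlip (m := b) (n := a)) (concat g f) = concat f g := by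
  simp only [concat, map_mul, rename_rename]
  rw [mul_comm]
  congr 3 <;> · funext i; simp

lemma symmSum_of_symmLaurent {n : ℕ} {x : L n} (hx : SymmLaurent x) :
    symmSum x = (n.factorial : ℚ) • x := by
  have h : ∀ σ : Equiv.Perm (Fin n), rename σ x = x := fun σ => by
    rw [← permL_eq_rename, hx σ]
  simp only [symmSum, h, Finset.sum_const, Finset.card_univ,
    Fintype.card_perm, Fintype.card_fin, Nat.cast_smul_eq_nsmul]

lemma mulOp_add_left {a b : ℕ} (f f' : L a) (g : L b) :
    mulOp (f + f') g = mulOp f g + mulOp f' g := by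
  rw [mulOp_eq, mulOp_eq, mulOp_eq, ← smul_add, ← symmSum_add]
  simp only [concat, map_add, add_mul]

lemma mulOp_add_right {a b : ℕ} (f : L a) (g g' : L b) :
    mulOp f (g + g') = mulOp f g + mulOp f g' := by
  rw [mulOp_eq, mulOp_eq, mulOp_eq, ← smul_add, ← symmSum_add]
  simp only [concat, map_add, mul_add]

lemma mulOp_smul_left {a b : ℕ} (q : ℚ) (f : L a) (g : L b) :
    mulOp (q • f) g = q • mulOp f g := by
  rw [mulOp_eq, mulOp_eq, concat_smul_left, symmSum_smul, smul_comm]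

lemma mulOp_smul_right {a b : ℕ} (q : ℚ) (f : L a) (g : L b) :
    mulOp f (q • g) = q • mulOp f g := by
  rw [mulOp_eq, mulOp_eq, concat_smul_right, symmSum_smul, smul_comm]

lemma symmLaurent_mulOp {a b : ℕ} (f : L a) (g : L b) : SymmLaurent (mulOp f g) := fun σ => by
  rw [permL_eq_rename, mulOp_eq, rename_smul, rename_symmSum σ σ, symmSum_rename]

lemma mulOp_assoc {a b c : ℕ} (f : L a) (g : L b) (h : L c) :
    reindexL (Nat.add_assoc a b c) (mulOp (mulOp f g) h) = mulOp f (mulOp g h) := by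
  have hab : ((a + b).factorial : ℚ) ≠ 0 := Nat.cast_ne_zero.2 (Nat.factorial_ne_zero _)
  have hbc : ((b + c).factorial : ℚ) ≠ 0 := Nat.cast_ne_zero.2 (Nat.factorial_ne_zero _)
  simp only [mulOp_eq, reindexL_eq_rename, concat_smul_left, concat_smul_right, symmSum_smul,
    symmSum_concat_symmSum_left, symmSum_concat_symmSum_right, rename_smul, smul_smul]
  rw [rename_symmSum _ (finCongr (Nat.add_assoc a b c)), rename_concat_assoc]
  congr 1
  field_simp

lemma mulOp_comm {a b : ℕ} (f : L a) (g : L b) :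
    mulOp f g = reindexL (Nat.add_comm b a) (mulOp g f) := by
  rw [reindexL_eq_rename, mulOp_eq, mulOp_eq, rename_smul, rename_symmSum _ finAddFlip,
    rename_concat_flip, mul_comm]

lemma mulOp_one {b : ℕ} {g : L b} (hg : SymmLaurent g) : mulOp g (1 : L 0) = g := by
  have hb : (b.factorial : ℚ) ≠ 0 := Nat.cast_ne_zero.2 (Nat.factorial_ne_zero _)
  have h : concat g (1 : L 0) = g := by
    rw [concat, map_one, mul_one]
    exact rename_id g
  rw [mulOp_eq, h, symmSum_of_symmLaurent hg, smul_smul]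
  simp [hb]

lemma one_mulOp {b : ℕ} {g : L b} (hg : SymmLaurent g) :
    reindexL (Nat.zero_add b) (mulOp (1 : L 0) g) = g :=
  (mulOp_comm g 1).symm.trans (mulOp_one hg)

/-- The product `f * g := Y(f,1)g` on `⊕_{n≥0} S_n^±` is ℚ-bilinear,
associative (up to the canonical identification `Fin ((a+b)+c) ≅ Fin (a+(b+c))`),
commutative (up to `Fin (b+a) ≅ Fin (a+b)`), graded with symmetric values
(`f * g ∈ S_{a+b}^±`), and has `1 ∈ S_0^± = ℚ` as a two-sided unit; hence
`⊕_{n≥0} S_n^±` is a commutative graded ℚ-algebra. -/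
theorem stmt_18 :
    (∀ (a b : ℕ) (f f' : L a) (g : L b), SymmLaurent f → SymmLaurent f' → SymmLaurent g →
        mulOp (f + f') g = mulOp f g + mulOp f' g)
    ∧ (∀ (a b : ℕ) (f : L a) (g g' : L b), SymmLaurent f → SymmLaurent g → SymmLaurent g' →
        mulOp f (g + g') = mulOp f g + mulOp f g')
    ∧ (∀ (a b : ℕ) (q : ℚ) (f : L a) (g : L b), SymmLaurent f → SymmLaurent g →
        mulOp (q • f) g = q • mulOp f g ∧ mulOp f (q • g) = q • mulOp f g)
    ∧ (∀ (a b : ℕ) (f : L a) (g : L b), SymmLaurent f → SymmLaurent g →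
        SymmLaurent (mulOp f g))
    ∧ (∀ (a b c : ℕ) (f : L a) (g : L b) (h : L c),
        SymmLaurent f → SymmLaurent g → SymmLaurent h →
        reindexL (Nat.add_assoc a b c) (mulOp (mulOp f g) h) = mulOp f (mulOp g h))
    ∧ (∀ (a b : ℕ) (f : L a) (g : L b), SymmLaurent f → SymmLaurent g →
        mulOp f g = reindexL (Nat.add_comm b a) (mulOp g f))
    ∧ (∀ (b : ℕ) (g : L b), SymmLaurent g →
        reindexL (Nat.zero_add b) (mulOp (1 : L 0) g) = g ∧ mulOp g (1 : L 0) = g) := by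
  exact ⟨fun _ _ f f' g _ _ _ => mulOp_add_left f f' g,
    fun _ _ f g g' _ _ _ => mulOp_add_right f g g',
    fun _ _ q f g _ _ => ⟨mulOp_smul_left q f g, mulOp_smul_right q f g⟩,
    fun _ _ f g _ _ => symmLaurent_mulOp f g,
    fun _ _ _ f g h _ _ _ => mulOp_assoc f g h,
    fun _ _ f g _ _ => mulOp_comm f g,
    fun _ _ hg => ⟨one_mulOp hg, mulOp_one hg⟩⟩
end
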